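/- Let A be a unital C*-algebra with a tracial state τ. Let u₁, u₂ ∈ A be unitary elements, let α > 0, and let p ∈ A be a projection with Re τ(p) > 0 such that ‖[u₁, p]‖₂ + ‖[u₂, p]‖₂ ≥ α ‖p‖₂. Then ‖[u₁, p]‖ + ‖[u₂, p]‖ ≥ α/√2, where ‖·‖ is the C*-norm. -/

import Mathlib

/-- The trace 2-norm `‖x‖₂ = √(Re τ(x*x))` associated with a tracial state `τ`. -/
noncomputable def traceNorm2 {A : Type*} [NormedRing A] [StarRing A] [NormedAlgebra ℂ A]
    (τ : A →ₗ[ℂ] ℂ) (x : A) : ℝ :=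
  Real.sqrt (τ (star x * x)).re

/-!
For `c = [a, p]` the compression `(1 - p) * c` equals `c * p`, so Pythagoras for the orthogonal
decomposition `c = p * c + (1 - p) * c` reads `‖c‖₂² = ‖p * c‖₂² + ‖c * p‖₂²`. Traciality makes the
2-norm `*`-invariant, so both summands are at most `‖c‖² * ‖p‖₂²`; hence
`‖[a, p]‖₂ ≤ √2 * ‖[a, p]‖ * ‖p‖₂`.
-/

theorem star_mul_mul_self_of_isStarProjection {R : Type*} [Semigroup R] [StarMul R] {p : R}
    (hp : IsStarProjection p) (x : R) : star (p * x) * (p * x) = star x * p * x := by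
  rw [star_mul, hp.isSelfAdjoint.star_eq, mul_assoc, ← mul_assoc p p, hp.isIdempotentElem.eq,
    ← mul_assoc]

theorem one_sub_mul_commutator_of_isIdempotentElem {R : Type*} [Ring R] {p : R}
    (hp : IsIdempotentElem p) (a : R) :
    (1 - p) * (a * p - p * a) = (a * p - p * a) * p := by
  have hpp : p * p = p := hp.eq
  simp only [sub_mul, mul_sub, one_mul, mul_assoc, hpp, ← mul_assoc p p]
  abel

section StarAlgebra

variable {A : Type*} [NormedRing A] [StarRing A] [NormedAlgebra ℂ A] {τ : A →ₗ[ℂ] ℂ} {p : A}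

theorem traceNorm2_nonneg (τ : A →ₗ[ℂ] ℂ) (x : A) : 0 ≤ traceNorm2 τ x :=
  Real.sqrt_nonneg _

theorem sq_traceNorm2 (hτpos : ∀ x : A, 0 ≤ (τ (star x * x)).re) (x : A) :
    traceNorm2 τ x ^ 2 = (τ (star x * x)).re :=
  Real.sq_sqrt (hτpos x)

theorem traceNorm2_star (hτtr : ∀ x y : A, τ (x * y) = τ (y * x)) (x : A) :
    traceNorm2 τ (star x) = traceNorm2 τ x := by
  rw [traceNorm2, traceNorm2, star_star, hτtr]

theorem sq_traceNorm2_mul_add_sq_traceNorm2_one_sub_mul (hτpos : ∀ x : A, 0 ≤ (τ (star x * x)).re)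
    (hp : IsStarProjection p) (x : A) :
    traceNorm2 τ (p * x) ^ 2 + traceNorm2 τ ((1 - p) * x) ^ 2 = traceNorm2 τ x ^ 2 := by
  have hsplit : star x * x = star x * p * x + star x * (1 - p) * x := by noncomm_ring
  simp only [sq_traceNorm2 hτpos, star_mul_mul_self_of_isStarProjection hp,
    star_mul_mul_self_of_isStarProjection hp.one_sub]
  rw [hsplit, map_add, Complex.add_re]

theorem traceNorm2_pos_of_isStarProjection (hp : IsStarProjection p) (hp_pos : 0 < (τ p).re) :
    0 < traceNorm2 τ p := by
  rw [traceNorm2, hp.isSelfAdjoint.star_eq, hp.isIdempotentElem.eq]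
  exact Real.sqrt_pos.mpr hp_pos

end StarAlgebra

section CStarAlgebra

variable {A : Type*} [CStarAlgebra A] {τ : A →ₗ[ℂ] ℂ} {p : A}

theorem traceNorm2_mul_le_norm_mul_traceNorm2 (hτpos : ∀ x : A, 0 ≤ (τ (star x * x)).re) (x y : A) :
    traceNorm2 τ (x * y) ≤ ‖x‖ * traceNorm2 τ y := by
  let : PartialOrder A := CStarAlgebra.spectralOrder A
  let : StarOrderedRing A := CStarAlgebra.spectralOrderedRing A
  have hconj : star (x * y) * (x * y) ≤ (‖x‖ ^ 2) • (star y * y) := by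
    simpa only [star_mul, mul_assoc, CStarRing.norm_star_mul_self, ← sq] using
      CStarAlgebra.star_left_conjugate_le_norm_smul (a := y) (b := star x * x)
  obtain ⟨z, hz⟩ := CStarAlgebra.nonneg_iff_eq_star_mul_self.mp (sub_nonneg.mpr hconj)
  have hre : (τ (star (x * y) * (x * y))).re ≤ ‖x‖ ^ 2 * (τ (star y * y)).re := by
    have hz_nonneg := hτpos z
    rw [← hz, map_sub, ← Complex.coe_smul, map_smul, smul_eq_mul, Complex.sub_re,
      Complex.re_ofReal_mul] at hz_nonneg
    exact sub_nonneg.mp hz_nonneg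
  refine le_of_sq_le_sq ?_ (mul_nonneg (norm_nonneg x) (traceNorm2_nonneg τ y))
  rwa [mul_pow, sq_traceNorm2 hτpos, sq_traceNorm2 hτpos]

theorem traceNorm2_mul_le_traceNorm2_mul_norm (hτpos : ∀ x : A, 0 ≤ (τ (star x * x)).re)
    (hτtr : ∀ x y : A, τ (x * y) = τ (y * x)) (x y : A) :
    traceNorm2 τ (x * y) ≤ traceNorm2 τ x * ‖y‖ := by
  calc traceNorm2 τ (x * y) = traceNorm2 τ (star y * star x) := by
        rw [← star_mul, traceNorm2_star hτtr]
    _ ≤ ‖star y‖ * traceNorm2 τ (star x) := traceNorm2_mul_le_norm_mul_traceNorm2 hτpos _ _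
    _ = traceNorm2 τ x * ‖y‖ := by rw [norm_star, traceNorm2_star hτtr, mul_comm]

theorem traceNorm2_commutator_le (hτpos : ∀ x : A, 0 ≤ (τ (star x * x)).re)
    (hτtr : ∀ x y : A, τ (x * y) = τ (y * x)) (hp : IsStarProjection p) (a : A) :
    traceNorm2 τ (a * p - p * a) ≤ √2 * ‖a * p - p * a‖ * traceNorm2 τ p := by
  have hcorner := one_sub_mul_commutator_of_isIdempotentElem hp.isIdempotentElem a
  set c := a * p - p * a
  have hpc : traceNorm2 τ (p * c) ≤ ‖c‖ * traceNorm2 τ p := by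
    rw [mul_comm ‖c‖]
    exact traceNorm2_mul_le_traceNorm2_mul_norm hτpos hτtr p c
  have hcp : traceNorm2 τ (c * p) ≤ ‖c‖ * traceNorm2 τ p :=
    traceNorm2_mul_le_norm_mul_traceNorm2 hτpos c p
  have hbound : 0 ≤ √2 * ‖c‖ * traceNorm2 τ p := by
    have := traceNorm2_nonneg τ p
    positivity
  refine le_of_sq_le_sq ?_ hbound
  calc traceNorm2 τ c ^ 2
      = traceNorm2 τ (p * c) ^ 2 + traceNorm2 τ (c * p) ^ 2 := by
        rw [← hcorner, sq_traceNorm2_mul_add_sq_traceNorm2_one_sub_mul hτpos hp]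
    _ ≤ (‖c‖ * traceNorm2 τ p) ^ 2 + (‖c‖ * traceNorm2 τ p) ^ 2 := by
        gcongr <;> exact traceNorm2_nonneg τ _
    _ = (√2 * ‖c‖ * traceNorm2 τ p) ^ 2 := by
        rw [mul_assoc, mul_pow √2, Real.sq_sqrt zero_le_two, two_mul]

theorem opNorm_commutator_ge_of_traceNorm_commutator_ge_unitary_general
    (hτpos : ∀ x : A, 0 ≤ (τ (star x * x)).re) (hτtr : ∀ x y : A, τ (x * y) = τ (y * x))
    (hp : IsStarProjection p) (hp_pos : 0 < (τ p).re) {a b : A} {α : ℝ}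
    (h : α * traceNorm2 τ p ≤
      traceNorm2 τ (a * p - p * a) + traceNorm2 τ (b * p - p * b)) :
    α / √2 ≤ ‖a * p - p * a‖ + ‖b * p - p * b‖ := by
  have hp_norm : 0 < traceNorm2 τ p := traceNorm2_pos_of_isStarProjection hp hp_pos
  rw [div_le_iff₀' (Real.sqrt_pos.mpr zero_lt_two)]
  refine le_of_mul_le_mul_right ?_ hp_norm
  calc α * traceNorm2 τ p
      ≤ traceNorm2 τ (a * p - p * a) + traceNorm2 τ (b * p - p * b) := h
    _ ≤ √2 * ‖a * p - p * a‖ * traceNorm2 τ p + √2 * ‖b * p - p * b‖ * traceNorm2 τ p :=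
        add_le_add (traceNorm2_commutator_le hτpos hτtr hp a)
          (traceNorm2_commutator_le hτpos hτtr hp b)
    _ = √2 * (‖a * p - p * a‖ + ‖b * p - p * b‖) * traceNorm2 τ p := by ring

end CStarAlgebra

/-- For unitaries `u₁, u₂` and a projection `p` of positive trace with
`‖[u₁,p]‖₂ + ‖[u₂,p]‖₂ ≥ α‖p‖₂`, one has `‖[u₁,p]‖ + ‖[u₂,p]‖ ≥ α/√2`. -/
theorem opNorm_commutator_ge_of_traceNorm_commutator_ge_unitary
    {A : Type*} [NormedRing A] [StarRing A] [CStarRing A] [CompleteSpace A]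
    [NormedAlgebra ℂ A] [StarModule ℂ A]
    (τ : A →ₗ[ℂ] ℂ)
    (hτ1 : τ 1 = 1)
    (hτpos : ∀ x : A, 0 ≤ (τ (star x * x)).re)
    (hτreal : ∀ x : A, (τ (star x * x)).im = 0)
    (hτtr : ∀ x y : A, τ (x * y) = τ (y * x))
    (u₁ u₂ : A) (hu₁ : u₁ ∈ unitary A) (hu₂ : u₂ ∈ unitary A)
    (α : ℝ) (hα : 0 < α)
    (p : A) (hp_sa : star p = p) (hp_idem : p * p = p) (hp_pos : 0 < (τ p).re)
    (h : α * traceNorm2 τ p ≤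
      traceNorm2 τ (u₁ * p - p * u₁) + traceNorm2 τ (u₂ * p - p * u₂)) :
    α / Real.sqrt 2 ≤ ‖u₁ * p - p * u₁‖ + ‖u₂ * p - p * u₂‖ := by
  let : CStarAlgebra A := {}
  exact opNorm_commutator_ge_of_traceNorm_commutator_ge_unitary_general hτpos hτtr
    ⟨hp_idem, hp_sa⟩ hp_pos h
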